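/- (Rogers–Ramanujan identities) For every complex number q with |q| < 1: (i) ∑_{n=0}^∞ q^{n²}/(q;q)_n = (q²;q⁵)_∞ (q³;q⁵)_∞ (q⁵;q⁵)_∞ / (q;q)_∞, and (ii) ∑_{n=0}^∞ q^{n(n+1)}/(q;q)_n = (q;q⁵)_∞ (q⁴;q⁵)_∞ (q⁵;q⁵)_∞ / (q;q)_∞. -/

import Mathlib

/-- The finite q-shifted factorial `(a;q)_n = ∏_{k=0}^{n-1} (1 - a q^k)`. -/
noncomputable def qPoch (a q : ℂ) (n : ℕ) : ℂ := ∏ k ∈ Finset.range n, (1 - a * q ^ k)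

/-- The infinite q-shifted factorial `(a;q)_∞ = ∏_{k=0}^∞ (1 - a q^k)`. -/
noncomputable def qPochInf (a q : ℂ) : ℂ := ∏' k : ℕ, (1 - a * q ^ k)

/-!
Both identities come from the Bailey chain. Taking `w = 1` in the finite Jacobi triple product shows
that `α r = (-1)^r q^(r(r-1)/2)` and `β n = δ_{n,0}` form a Bailey pair relative to `q^a` for every
natural number `a`. If `a ≤ 1`, one step of the chain, which rests on the `q`-Vandermonde summation,
turns `β` into `1/(q;q)_n`. Letting `n` tend to infinity in a second step equates
`∑ q^(n(n+a))/(q;q)_n` with `1/(q;q)_∞` times a theta series in base `q^5`, and the Jacobi triple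
product, itself a limit of its finite form, factors that series. The two identities are the cases
`a = 0` and `a = 1`.
-/

open Filter Topology Finset

section General

lemma tendsto_tsum_mul_of_norm_le {ι κ R : Type*} [NormedRing R] [CompleteSpace R] {l : Filter κ}
    {u : ι → R} {f : κ → ι → R} {C : ℝ} {L : R} (hu : Summable fun i => ‖u i‖)
    (hf : ∀ k i, ‖f k i‖ ≤ C) (hlim : ∀ i, Tendsto (fun k => f k i) l (𝓝 L)) :
    Tendsto (fun k => ∑' i, u i * f k i) l (𝓝 ((∑' i, u i) * L)) := by
  rw [← hu.of_norm.tsum_mul_right]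
  refine tendsto_tsum_of_dominated_convergence (hu.mul_right C) (fun i => (hlim i).const_mul _)
    (.of_forall fun k i => (norm_mul_le _ _).trans ?_)
  gcongr
  exact hf k i

lemma not_isOfFinOrder_of_norm_lt_one {R : Type*} [NormedDivisionRing R] {x : R} (hx : ‖x‖ < 1) :
    ¬IsOfFinOrder x :=
  fun h => hx.ne h.norm_eq_one

end General

section Pochhammer

variable {q : ℂ}

lemma qPoch_zero (a q : ℂ) : qPoch a q 0 = 1 :=
  prod_range_zero _

lemma qPoch_succ (a q : ℂ) (n : ℕ) : qPoch a q (n + 1) = qPoch a q n * (1 - a * q ^ n) :=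
  prod_range_succ _ n

lemma qPoch_one_succ (q : ℂ) (n : ℕ) : qPoch 1 q (n + 1) = 0 :=
  prod_eq_zero (mem_range.2 n.succ_pos) (by simp)

lemma one_sub_pow_ne_zero (hq : ¬IsOfFinOrder q) {n : ℕ} (hn : n ≠ 0) : 1 - q ^ n ≠ 0 :=
  sub_ne_zero.2 fun h => hq <| isOfFinOrder_iff_pow_eq_one.2 ⟨n, hn.bot_lt, h.symm⟩

lemma qPoch_self_ne_zero (hq : ¬IsOfFinOrder q) (n : ℕ) : qPoch q q n ≠ 0 :=
  prod_ne_zero_iff.2 fun k _ => by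
    simpa only [pow_succ'] using one_sub_pow_ne_zero hq k.succ_ne_zero

lemma summable_neg_mul_pow (a : ℂ) (hq : ‖q‖ < 1) : Summable fun k : ℕ => -(a * q ^ k) :=
  ((summable_geometric_of_norm_lt_one hq).mul_left a).neg

lemma tendsto_qPoch (a : ℂ) (hq : ‖q‖ < 1) : Tendsto (qPoch a q) atTop (𝓝 (qPochInf a q)) := by
  have hmult : Multipliable fun k : ℕ => 1 - a * q ^ k := by
    simpa only [← sub_eq_add_neg] using
      Complex.multipliable_one_add_of_summable (summable_neg_mul_pow a hq)
  exact hmult.tendsto_prod_tprod_nat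

lemma qPochInf_self_ne_zero (hq : ‖q‖ < 1) : qPochInf q q ≠ 0 := by
  have hfactor (k : ℕ) : 1 + -(q * q ^ k) ≠ 0 := by
    simpa only [pow_succ', ← sub_eq_add_neg] using
      one_sub_pow_ne_zero (not_isOfFinOrder_of_norm_lt_one hq) k.succ_ne_zero
  simpa only [qPochInf, sub_eq_add_neg] using
    tprod_one_add_ne_zero_of_summable hfactor (summable_neg_mul_pow q hq).norm

lemma qPochInf_zero_left (q : ℂ) : qPochInf 0 q = 1 := by
  simp [qPochInf]

end Pochhammer

section InvQFactorial

variable {q : ℂ}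

/-- The reciprocal `q`-factorial `1 / (q;q)_n`, extended by zero to negative `n`, so that sums with
natural boundaries become sums over all of `ℤ`, which can be reindexed by translation. -/
noncomputable def invQFactorial (q : ℂ) : ℤ → ℂ
  | .ofNat n => (qPoch q q n)⁻¹
  | .negSucc _ => 0

lemma invQFactorial_natCast (q : ℂ) (n : ℕ) : invQFactorial q n = (qPoch q q n)⁻¹ :=
  rfl

lemma invQFactorial_zero (q : ℂ) : invQFactorial q 0 = 1 := by
  simpa [qPoch_zero] using invQFactorial_natCast q 0

lemma invQFactorial_of_neg (q : ℂ) {n : ℤ} (hn : n < 0) : invQFactorial q n = 0 := by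
  obtain ⟨k, rfl⟩ := Int.eq_negSucc_of_lt_zero hn
  rfl

lemma invQFactorial_neg_mul (q : ℂ) {n : ℤ} (hn : n ≠ 0) :
    invQFactorial q (-n) * invQFactorial q n = 0 := by
  rcases hn.lt_or_gt with hn | hn
  · rw [invQFactorial_of_neg q hn, mul_zero]
  · rw [invQFactorial_of_neg q (neg_neg_of_pos hn), zero_mul]

lemma invQFactorial_sub_one (hq : ¬IsOfFinOrder q) (n : ℤ) :
    invQFactorial q (n - 1) = (1 - q ^ n) * invQFactorial q n := by
  rcases lt_trichotomy n 0 with hn | rfl | hn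
  · rw [invQFactorial_of_neg q hn, invQFactorial_of_neg q (by lia), mul_zero]
  · simp [invQFactorial_of_neg]
  · obtain ⟨k, rfl⟩ : ∃ k : ℕ, n = (k + 1 : ℕ) := ⟨(n - 1).toNat, by lia⟩
    have hk := one_sub_pow_ne_zero hq k.succ_ne_zero
    rw [Nat.cast_succ, add_sub_cancel_right, ← Nat.cast_succ, zpow_natCast, invQFactorial_natCast,
      invQFactorial_natCast, qPoch_succ, ← pow_succ', mul_inv, mul_left_comm, mul_inv_cancel₀ hk,
      mul_one]

/-- The `q`-Pascal rule for `(q;q)_(x+y) / ((q;q)_x (q;q)_y)`, divided by `(q;q)_(x+y-1)`. -/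
lemma one_sub_zpow_add_mul_invQFactorial (hq : ¬IsOfFinOrder q) (hq₀ : q ≠ 0) (x y : ℤ) :
    (1 - q ^ (x + y)) * (invQFactorial q x * invQFactorial q y) =
      invQFactorial q (x - 1) * invQFactorial q y +
        q ^ x * (invQFactorial q x * invQFactorial q (y - 1)) := by
  rw [invQFactorial_sub_one hq, invQFactorial_sub_one hq, zpow_add₀ hq₀]
  ring

lemma tendsto_invQFactorial (hq : ‖q‖ < 1) :
    Tendsto (invQFactorial q) atTop (𝓝 (qPochInf q q)⁻¹) := by
  rw [← Nat.map_cast_int_atTop, tendsto_map'_iff]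
  exact (tendsto_qPoch q hq).inv₀ (qPochInf_self_ne_zero hq)

lemma exists_norm_invQFactorial_le (hq : ‖q‖ < 1) : ∃ C, ∀ n, ‖invQFactorial q n‖ ≤ C := by
  have hlim := (tendsto_invQFactorial hq).comp tendsto_natCast_atTop_atTop
  obtain ⟨C, hC⟩ := (Metric.isBounded_range_of_tendsto _ hlim).exists_norm_le
  have hC' (n : ℕ) : ‖invQFactorial q n‖ ≤ C := hC _ ⟨n, rfl⟩
  refine ⟨C, fun n => ?_⟩
  rcases n with n | n
  · exact hC' n
  · simpa [invQFactorial] using (norm_nonneg _).trans (hC' 0)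

lemma tendsto_sum_mul_invQFactorial (hq : ‖q‖ < 1) {u : ℕ → ℂ} (hu : Summable u) :
    Tendsto (fun n : ℕ => ∑ s ∈ range (n + 1), u s * invQFactorial q (n - s)) atTop
      (𝓝 ((∑' s, u s) * (qPochInf q q)⁻¹)) := by
  obtain ⟨C, hC⟩ := exists_norm_invQFactorial_le hq
  refine (tendsto_tsum_mul_of_norm_le hu.norm (f := fun (n s : ℕ) => invQFactorial q (n - s))
    (fun _ _ => hC _) fun s => ?_).congr fun n => ?_
  · exact (tendsto_invQFactorial hq).comp <|
      tendsto_atTop_add_const_right _ (-(s : ℤ)) tendsto_natCast_atTop_atTop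
  · refine tsum_eq_sum fun s hs => ?_
    rw [mem_range] at hs
    rw [invQFactorial_of_neg q (by lia), mul_zero]

lemma summable_zpow_mul_invQFactorial (hq : ‖q‖ < 1) (a : ℕ) :
    Summable fun n : ℕ => q ^ ((n : ℤ) * (n + a)) * invQFactorial q n := by
  obtain ⟨C, hC⟩ := exists_norm_invQFactorial_le hq
  refine .of_norm_bounded
    ((summable_geometric_of_lt_one (norm_nonneg q) hq).mul_right C) fun n => ?_
  have hexp : n ≤ n * (n + a) := n.le_mul_self.trans (by gcongr; lia)
  rw [norm_mul, ← Nat.cast_add, ← Nat.cast_mul, zpow_natCast, norm_pow]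
  gcongr ?_ * ?_
  · exact pow_le_pow_of_le_one (norm_nonneg q) hq.le hexp
  · exact hC n

end InvQFactorial

section QVandermonde

variable {q : ℂ}

/-- The summand of the `q`-Vandermonde sum
`∑ k, q^(k(k+m)) / ((q;q)_(M-k) (q;q)_k (q;q)_(k+m)) = 1 / ((q;q)_M (q;q)_(M+m))`. -/
noncomputable def qVandermondeTerm (q : ℂ) (M m k : ℤ) : ℂ :=
  q ^ (k * (k + m)) * (invQFactorial q (M - k) * invQFactorial q k) * invQFactorial q (k + m)

lemma qVandermondeTerm_add_one (hq : ¬IsOfFinOrder q) (hq₀ : q ≠ 0) (M m k : ℤ) :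
    (1 - q ^ (M + 1)) * qVandermondeTerm q (M + 1) m k =
      qVandermondeTerm q M m k + q ^ (M + 1 + m) * qVandermondeTerm q M (m + 1) (k - 1) := by
  have hpascal := one_sub_zpow_add_mul_invQFactorial hq hq₀ (M + 1 - k) k
  have hpow : q ^ (k * (k + m)) * q ^ (M + 1 - k) =
      q ^ (M + 1 + m) * q ^ ((k - 1) * (k - 1 + (m + 1))) := by
    rw [← zpow_add₀ hq₀, ← zpow_add₀ hq₀]
    ring_nf
  rw [sub_add_cancel, show M + 1 - k - 1 = M - k by ring] at hpascal
  rw [show k - 1 + (m + 1) = k + m by ring] at hpow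
  rw [qVandermondeTerm, qVandermondeTerm, qVandermondeTerm, show M - (k - 1) = M + 1 - k by ring,
    show k - 1 + (m + 1) = k + m by ring]
  linear_combination q ^ (k * (k + m)) * invQFactorial q (k + m) * hpascal +
    invQFactorial q (M + 1 - k) * invQFactorial q (k - 1) * invQFactorial q (k + m) * hpow

lemma hasSum_qVandermondeTerm_natCast (hq : ¬IsOfFinOrder q) (hq₀ : q ≠ 0) (M : ℕ) (m : ℤ) :
    HasSum (qVandermondeTerm q M m) (invQFactorial q M * invQFactorial q (M + m)) := by
  induction M generalizing m with
  | zero =>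
    have hzero (k : ℤ) (hk : k ≠ 0) : qVandermondeTerm q 0 m k = 0 := by
      simp [qVandermondeTerm, invQFactorial_neg_mul q hk]
    simpa [qVandermondeTerm, invQFactorial_zero] using hasSum_single 0 hzero
  | succ M ih =>
    have hM : 1 - q ^ ((M : ℤ) + 1) ≠ 0 := by
      exact_mod_cast one_sub_pow_ne_zero hq M.succ_ne_zero
    have hshift := (Equiv.subRight (1 : ℤ)).hasSum_iff.2 (ih (m + 1))
    have hval : (1 - q ^ ((M : ℤ) + 1)) * (invQFactorial q (M + 1) * invQFactorial q (M + 1 + m)) =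
        invQFactorial q M * invQFactorial q (M + m) +
          q ^ ((M : ℤ) + 1 + m) * (invQFactorial q M * invQFactorial q (M + (m + 1))) := by
      have hM' := invQFactorial_sub_one hq (M + 1)
      have hMm := invQFactorial_sub_one hq (M + 1 + m)
      rw [add_sub_cancel_right] at hM'
      rw [show (M : ℤ) + 1 + m - 1 = M + m by ring] at hMm
      rw [hM', hMm, show (M : ℤ) + (m + 1) = M + 1 + m by ring]
      ring
    rw [Nat.cast_succ, ← hasSum_mul_left_iff hM, hval]
    exact ((ih m).add (hshift.mul_left _)).congr_fun (qVandermondeTerm_add_one hq hq₀ M m)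

lemma hasSum_qVandermondeTerm (hq : ¬IsOfFinOrder q) (hq₀ : q ≠ 0) (M m : ℤ) :
    HasSum (qVandermondeTerm q M m) (invQFactorial q M * invQFactorial q (M + m)) := by
  rcases lt_or_ge M 0 with hM | hM
  · rw [invQFactorial_of_neg q hM, zero_mul]
    convert hasSum_zero with k
    rcases lt_or_ge k 0 with hk | hk
    · simp [qVandermondeTerm, invQFactorial_of_neg q hk]
    · simp [qVandermondeTerm, invQFactorial_of_neg q (show M - k < 0 by lia)]
  · lift M to ℕ using hM
    exact hasSum_qVandermondeTerm_natCast hq hq₀ M m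

lemma sum_range_zpow_mul_invQFactorial (hq : ¬IsOfFinOrder q) (hq₀ : q ≠ 0) {a : ℤ} (ha : a ≤ 1)
    (n : ℕ) (r : ℤ) :
    ∑ s ∈ range (n + 1), q ^ ((s : ℤ) * (s + a)) * invQFactorial q (n - s) *
        (invQFactorial q (s - r) * invQFactorial q (s + r + a)) =
      q ^ (r * (r + a)) * (invQFactorial q (n - r) * invQFactorial q (n + r + a)) := by
  have hterm (s : ℤ) : q ^ (s * (s + a)) * invQFactorial q (n - s) *
      (invQFactorial q (s - r) * invQFactorial q (s + r + a)) =
        q ^ (r * (r + a)) * qVandermondeTerm q (n - r) (2 * r + a) (s - r) := by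
    have hpow : q ^ (s * (s + a)) = q ^ (r * (r + a)) * q ^ ((s - r) * (s + r + a)) := by
      rw [← zpow_add₀ hq₀]
      ring_nf
    rw [qVandermondeTerm, show s - r + (2 * r + a) = s + r + a by ring, sub_sub_sub_cancel_right,
      hpow]
    ring
  have hint := (((Equiv.subRight r).hasSum_iff.2
    (hasSum_qVandermondeTerm hq hq₀ (n - r) (2 * r + a))).mul_left _).congr_fun hterm
  rw [show (n : ℤ) - r + (2 * r + a) = n + r + a by ring, ← Nat.cast_injective.hasSum_iff] at hint
  · refine (hasSum_sum_of_ne_finset_zero fun s hs => ?_).unique hint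
    rw [mem_range] at hs
    simp [invQFactorial_of_neg q (show (n : ℤ) - s < 0 by lia)]
  · intro s hs
    have hs₀ : s < 0 := by
      by_contra! h
      exact hs ⟨s.toNat, Int.toNat_of_nonneg h⟩
    rcases lt_or_ge s r with hr | hr
    · simp [invQFactorial_of_neg q (sub_neg.2 hr)]
    · simp [invQFactorial_of_neg q (show s + r + a < 0 by lia)]

end QVandermonde

section ThetaTerm

variable {q w : ℂ}

/-- The summand `(-1)^r q^(r(r-1)/2) w^r` of the theta series in the Jacobi triple product. The
division of integers in the exponent is exact. -/
noncomputable def thetaTerm (q w : ℂ) (r : ℤ) : ℂ :=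
  (-1) ^ r * q ^ (r * (r - 1) / 2) * w ^ r

lemma thetaTerm_zero (q w : ℂ) : thetaTerm q w 0 = 1 := by
  simp [thetaTerm]

lemma two_mul_mul_pred_ediv_two (r : ℤ) : 2 * (r * (r - 1) / 2) = r * (r - 1) :=
  Int.two_mul_ediv_two_of_even (Int.even_mul_pred_self r)

lemma thetaTerm_add_one (hq₀ : q ≠ 0) (hw : w ≠ 0) (r : ℤ) :
    thetaTerm q w (r + 1) = -(w * q ^ r) * thetaTerm q w r := by
  have hexp : (r + 1) * (r + 1 - 1) / 2 = r * (r - 1) / 2 + r := by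
    linarith [two_mul_mul_pred_ediv_two r, two_mul_mul_pred_ediv_two (r + 1)]
  rw [thetaTerm, thetaTerm, hexp, zpow_add₀ hq₀, zpow_add_one₀ hw, zpow_add_one₀ (by simp)]
  ring

lemma thetaTerm_neg (hq₀ : q ≠ 0) (w : ℂ) (r : ℤ) :
    thetaTerm q w (-r) = thetaTerm q (q / w) r := by
  have hexp : -r * (-r - 1) / 2 = r * (r - 1) / 2 + r := by
    linarith [two_mul_mul_pred_ediv_two r, two_mul_mul_pred_ediv_two (-r)]
  rw [thetaTerm, thetaTerm, hexp, zpow_add₀ hq₀, div_zpow, zpow_neg, zpow_neg, ← inv_zpow,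
    inv_neg_one]
  ring

lemma thetaTerm_ne_zero (hq₀ : q ≠ 0) (hw : w ≠ 0) (r : ℤ) : thetaTerm q w r ≠ 0 :=
  mul_ne_zero (mul_ne_zero (zpow_ne_zero _ (by simp)) (zpow_ne_zero _ hq₀)) (zpow_ne_zero _ hw)

lemma summable_thetaTerm_natCast (hq : ‖q‖ < 1) (hq₀ : q ≠ 0) (hw : w ≠ 0) :
    Summable fun n : ℕ => thetaTerm q w n := by
  refine summable_of_ratio_test_tendsto_lt_one zero_lt_one
    (.of_forall fun n => thetaTerm_ne_zero hq₀ hw n) ?_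
  have hratio (n : ℕ) :
      ‖thetaTerm q w (n + 1 : ℕ)‖ / ‖thetaTerm q w n‖ = ‖w‖ * ‖q‖ ^ n := by
    rw [← norm_div, Nat.cast_succ, thetaTerm_add_one hq₀ hw,
      mul_div_cancel_right₀ _ (thetaTerm_ne_zero hq₀ hw n), norm_neg, norm_mul, norm_zpow,
      zpow_natCast]
  simp only [hratio]
  simpa using (tendsto_pow_atTop_nhds_zero_of_lt_one (norm_nonneg q) hq).const_mul ‖w‖

lemma summable_thetaTerm (hq : ‖q‖ < 1) (hq₀ : q ≠ 0) (hw : w ≠ 0) : Summable (thetaTerm q w) := by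
  refine .of_nat_of_neg (summable_thetaTerm_natCast hq hq₀ hw) ?_
  simpa only [thetaTerm_neg hq₀] using summable_thetaTerm_natCast hq hq₀ (div_ne_zero hq₀ hw)

lemma zpow_mul_zpow_mul_thetaTerm_one (hq₀ : q ≠ 0) (a : ℕ) (r : ℤ) :
    q ^ (r * (r + a)) * (q ^ (r * (r + a)) * thetaTerm q 1 r) =
      thetaTerm (q ^ 5) (q ^ (2 * (a + 1))) r := by
  have hexp : r * (r + a) + (r * (r + a) + r * (r - 1) / 2) =
      (5 : ℕ) * (r * (r - 1) / 2) + (2 * (a + 1) : ℕ) * r := by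
    push_cast
    linarith [two_mul_mul_pred_ediv_two r]
  simp only [thetaTerm, ← zpow_natCast q, ← zpow_mul, one_zpow, mul_one]
  rw [mul_assoc, ← zpow_add₀ hq₀, ← hexp, zpow_add₀ hq₀, zpow_add₀ hq₀]
  ring

end ThetaTerm

section FiniteTripleProduct

variable {q w : ℂ}

/-- The summand of the finite Jacobi triple product, whose sum is
`(w;q)_M (q/w;q)_N / (q;q)_(M+N)`. -/
noncomputable def finiteThetaTerm (q w : ℂ) (M N r : ℤ) : ℂ :=
  thetaTerm q w r * (invQFactorial q (M - r) * invQFactorial q (N + r))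

lemma finiteThetaTerm_neg (hq₀ : q ≠ 0) (w : ℂ) (M N r : ℤ) :
    finiteThetaTerm q w M N (-r) = finiteThetaTerm q (q / w) N M r := by
  rw [finiteThetaTerm, finiteThetaTerm, thetaTerm_neg hq₀, sub_neg_eq_add, ← sub_eq_add_neg,
    mul_comm (invQFactorial q (M + r))]

lemma finiteThetaTerm_add_one (hq : ¬IsOfFinOrder q) (hq₀ : q ≠ 0) (hw : w ≠ 0) (M N r : ℤ) :
    (1 - q ^ (M + 1 + N)) * finiteThetaTerm q w (M + 1) N r =
      finiteThetaTerm q w M N r + -(w * q ^ M) * finiteThetaTerm q w M N (r - 1) := by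
  have hpascal := one_sub_zpow_add_mul_invQFactorial hq hq₀ (M + 1 - r) (N + r)
  have htheta : q ^ (M + 1 - r) * thetaTerm q w r = -(w * q ^ M) * thetaTerm q w (r - 1) := by
    have hpow : q ^ M = q ^ (M + 1 - r) * q ^ (r - 1) := by
      rw [← zpow_add₀ hq₀]
      ring_nf
    have hsucc := thetaTerm_add_one hq₀ hw (r - 1)
    rw [sub_add_cancel] at hsucc
    rw [hsucc, hpow]
    ring
  rw [show M + 1 - r + (N + r) = M + 1 + N by ring, show M + 1 - r - 1 = M - r by ring,
    add_sub_assoc N] at hpascal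
  rw [finiteThetaTerm, finiteThetaTerm, finiteThetaTerm, show M - (r - 1) = M + 1 - r by ring]
  linear_combination thetaTerm q w r * hpascal +
    invQFactorial q (M + 1 - r) * invQFactorial q (N + (r - 1)) * htheta

lemma hasSum_finiteThetaTerm_add_one (hq : ¬IsOfFinOrder q) (hq₀ : q ≠ 0) (hw : w ≠ 0) {M N : ℕ}
    {P : ℂ} (h : HasSum (finiteThetaTerm q w M N) (invQFactorial q (M + N) * P)) :
    HasSum (finiteThetaTerm q w (M + 1) N)
      (invQFactorial q (M + 1 + N) * (P * (1 - w * q ^ M))) := by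
  have hMN : 1 - q ^ ((M : ℤ) + 1 + N) ≠ 0 := by
    exact_mod_cast one_sub_pow_ne_zero hq (show M + 1 + N ≠ 0 by lia)
  have hshift := (Equiv.subRight (1 : ℤ)).hasSum_iff.2 h
  have hval : (1 - q ^ ((M : ℤ) + 1 + N)) * (invQFactorial q (M + 1 + N) *
      (P * (1 - w * q ^ M))) = invQFactorial q (M + N) * P +
        -(w * q ^ (M : ℤ)) * (invQFactorial q (M + N) * P) := by
    have hrec := invQFactorial_sub_one hq (M + 1 + N)
    rw [show (M : ℤ) + 1 + N - 1 = M + N by ring] at hrec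
    rw [hrec, zpow_natCast]
    ring
  rw [← hasSum_mul_left_iff hMN, hval]
  exact (h.add (hshift.mul_left _)).congr_fun (finiteThetaTerm_add_one hq hq₀ hw M N)

lemma hasSum_finiteThetaTerm_zero_right (hq : ¬IsOfFinOrder q) (hq₀ : q ≠ 0) (hw : w ≠ 0)
    (M : ℕ) : HasSum (finiteThetaTerm q w M 0) (invQFactorial q M * qPoch w q M) := by
  induction M with
  | zero =>
    have hzero (r : ℤ) (hr : r ≠ 0) : finiteThetaTerm q w 0 0 r = 0 := by
      simp [finiteThetaTerm, invQFactorial_neg_mul q hr]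
    simpa [finiteThetaTerm, thetaTerm_zero, invQFactorial_zero, qPoch_zero] using
      hasSum_single 0 hzero
  | succ M ih =>
    simpa [qPoch_succ] using hasSum_finiteThetaTerm_add_one (N := 0) hq hq₀ hw (by simpa using ih)

theorem hasSum_finiteThetaTerm (hq : ¬IsOfFinOrder q) (hq₀ : q ≠ 0) (hw : w ≠ 0) (M N : ℕ) :
    HasSum (finiteThetaTerm q w M N)
      (invQFactorial q (M + N) * (qPoch w q M * qPoch (q / w) q N)) := by
  induction M with
  | zero =>
    have hN := hasSum_finiteThetaTerm_zero_right hq hq₀ (div_ne_zero hq₀ hw) N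
    have hneg : HasSum (finiteThetaTerm q w 0 N ∘ Equiv.neg ℤ) _ :=
      hN.congr_fun (finiteThetaTerm_neg hq₀ w 0 N)
    simpa [qPoch_zero] using (Equiv.neg ℤ).hasSum_iff.1 hneg
  | succ M ih =>
    rw [qPoch_succ, Nat.cast_succ, mul_right_comm (qPoch w q M)]
    exact hasSum_finiteThetaTerm_add_one hq hq₀ hw ih

end FiniteTripleProduct

section BaileyPair

variable {q w : ℂ} {a : ℤ} {α : ℤ → ℂ} {β : ℕ → ℂ}

/-- Bailey pairs relative to `q^a`, in the bilateral form
`β n = ∑ r : ℤ, α r / ((q;q)_(n-r) (q;q)_(n+r+a))`. Compared with the usual one-sided form, the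
contributions of `r` and `-r - a` are kept apart and the factor `(q;q)_a` is dropped. -/
def IsBaileyPair (q : ℂ) (a : ℤ) (α : ℤ → ℂ) (β : ℕ → ℂ) : Prop :=
  ∀ n : ℕ, HasSum (fun r : ℤ => α r * (invQFactorial q (n - r) * invQFactorial q (n + r + a))) (β n)

theorem IsBaileyPair.chain (hq : ¬IsOfFinOrder q) (hq₀ : q ≠ 0) (ha : a ≤ 1)
    (h : IsBaileyPair q a α β) :
    IsBaileyPair q a (fun r => q ^ (r * (r + a)) * α r) fun n =>
      ∑ s ∈ range (n + 1), q ^ ((s : ℤ) * (s + a)) * β s * invQFactorial q (n - s) := by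
  intro n
  have hsum := hasSum_sum (s := range (n + 1)) fun s _ =>
    (h s).mul_left (q ^ ((s : ℤ) * (s + a)) * invQFactorial q (n - s))
  simp only [mul_right_comm _ (invQFactorial q _)] at hsum
  refine hsum.congr_fun fun r => ?_
  rw [mul_right_comm, ← sum_range_zpow_mul_invQFactorial hq hq₀ ha, sum_mul]
  exact sum_congr rfl fun s _ => by ring

theorem IsBaileyPair.tendsto (hq : ‖q‖ < 1) (h : IsBaileyPair q a α β) (hα : Summable α) :
    Tendsto β atTop (𝓝 ((∑' r, α r) * ((qPochInf q q)⁻¹ * (qPochInf q q)⁻¹))) := by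
  obtain ⟨C, hC⟩ := exists_norm_invQFactorial_le hq
  have hlim (b : ℤ) : Tendsto (fun n : ℕ => invQFactorial q (n + b)) atTop (𝓝 (qPochInf q q)⁻¹) :=
    (tendsto_invQFactorial hq).comp <|
      tendsto_atTop_add_const_right _ b tendsto_natCast_atTop_atTop
  refine (tendsto_tsum_mul_of_norm_le (C := C * C) hα.norm (fun n r => ?_) fun r => ?_).congr
    fun n => (h n).tsum_eq
  · rw [norm_mul]
    exact mul_le_mul (hC _) (hC _) (norm_nonneg _) ((norm_nonneg _).trans (hC 0))
  · simpa only [add_assoc, ← sub_eq_add_neg] using (hlim (-r)).mul (hlim (r + a))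

/-- The sequence `β` of the next pair in the Bailey chain has two expressions for its limit. -/
theorem IsBaileyPair.tsum_eq (hq : ‖q‖ < 1) (hq₀ : q ≠ 0) (ha : a ≤ 1) (h : IsBaileyPair q a α β)
    (hα : Summable fun r => q ^ (r * (r + a)) * α r)
    (hβ : Summable fun n : ℕ => q ^ ((n : ℤ) * (n + a)) * β n) :
    ∑' n : ℕ, q ^ ((n : ℤ) * (n + a)) * β n =
      (∑' r : ℤ, q ^ (r * (r + a)) * α r) / qPochInf q q := by
  have hlim := tendsto_nhds_unique (tendsto_sum_mul_invQFactorial hq hβ)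
    ((h.chain (not_isOfFinOrder_of_norm_lt_one hq) hq₀ ha).tendsto hq hα)
  rw [← mul_assoc] at hlim
  rw [div_eq_mul_inv]
  exact mul_right_cancel₀ (inv_ne_zero (qPochInf_self_ne_zero hq)) hlim

lemma isBaileyPair_thetaTerm (hq : ¬IsOfFinOrder q) (hq₀ : q ≠ 0) (hw : w ≠ 0) (a : ℕ) :
    IsBaileyPair q a (thetaTerm q w) fun n =>
      invQFactorial q (2 * n + a) * (qPoch w q n * qPoch (q / w) q (n + a)) := by
  intro n
  have hsum := hasSum_finiteThetaTerm hq hq₀ hw n (n + a)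
  rw [Nat.cast_add, ← add_assoc, ← two_mul] at hsum
  refine hsum.congr_fun fun r => ?_
  rw [finiteThetaTerm, add_right_comm]

lemma isBaileyPair_single (hq : ¬IsOfFinOrder q) (hq₀ : q ≠ 0) (a : ℕ) :
    IsBaileyPair q a (thetaTerm q 1) (Pi.single 0 1) := by
  convert isBaileyPair_thetaTerm hq hq₀ one_ne_zero a with n
  rcases n with _ | n
  · simp [qPoch_zero, invQFactorial_natCast, qPoch_self_ne_zero hq]
  · simp [qPoch_one_succ]

lemma isBaileyPair_invQFactorial (hq : ¬IsOfFinOrder q) (hq₀ : q ≠ 0) {a : ℕ} (ha : a ≤ 1) :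
    IsBaileyPair q a (fun r => q ^ (r * (r + a)) * thetaTerm q 1 r) fun n =>
      invQFactorial q n := by
  convert (isBaileyPair_single hq hq₀ a).chain hq hq₀ (by exact_mod_cast ha) with n
  simp [Pi.single_apply]

end BaileyPair

section RogersRamanujan

variable {q w : ℂ}

theorem hasSum_thetaTerm (hq : ‖q‖ < 1) (hq₀ : q ≠ 0) (hw : w ≠ 0) :
    HasSum (thetaTerm q w) (qPochInf w q * qPochInf (q / w) q * qPochInf q q) := by
  have hsum := summable_thetaTerm hq hq₀ hw
  have hpair := isBaileyPair_thetaTerm (not_isOfFinOrder_of_norm_lt_one hq) hq₀ hw 0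
  have hdouble : Tendsto (fun n : ℕ => 2 * (n : ℤ)) atTop atTop :=
    tendsto_natCast_atTop_atTop.const_mul_atTop' two_pos
  have hprod := ((tendsto_invQFactorial hq).comp hdouble).mul
    ((tendsto_qPoch w hq).mul (tendsto_qPoch (q / w) hq))
  have hlim := tendsto_nhds_unique (hpair.tendsto hq hsum) (by simpa using hprod)
  have hne := qPochInf_self_ne_zero hq
  convert hsum.hasSum using 1
  field_simp at hlim
  rw [hlim]
  ring

theorem hasSum_rogersRamanujan (hq : ‖q‖ < 1) (hq₀ : q ≠ 0) {a : ℕ} (ha : a ≤ 1) :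
    HasSum (fun n : ℕ => q ^ (n * (n + a)) / qPoch q q n)
      (qPochInf (q ^ (2 * (a + 1))) (q ^ 5) * qPochInf (q ^ 5 / q ^ (2 * (a + 1))) (q ^ 5) *
        qPochInf (q ^ 5) (q ^ 5) / qPochInf q q) := by
  have hq₅ : ‖q ^ 5‖ < 1 := by
    simpa only [norm_pow] using pow_lt_one₀ (norm_nonneg q) hq (by simp)
  have htheta := hasSum_thetaTerm hq₅ (pow_ne_zero 5 hq₀) (pow_ne_zero (2 * (a + 1)) hq₀)
  rw [← funext (zpow_mul_zpow_mul_thetaTerm_one hq₀ a)] at htheta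
  have hsum := summable_zpow_mul_invQFactorial hq a
  have htsum := (isBaileyPair_invQFactorial (not_isOfFinOrder_of_norm_lt_one hq) hq₀ ha).tsum_eq
    hq hq₀ (by exact_mod_cast ha) htheta.summable hsum
  rw [htheta.tsum_eq] at htsum
  rw [← htsum]
  refine hsum.hasSum.congr_fun fun n => ?_
  rw [invQFactorial_natCast, div_eq_mul_inv]
  norm_cast

lemma hasSum_rogersRamanujan_zero (a : ℕ) :
    HasSum (fun n : ℕ => (0 : ℂ) ^ (n * (n + a)) / qPoch 0 0 n) 1 := by
  convert hasSum_single (f := fun n : ℕ => (0 : ℂ) ^ (n * (n + a)) / qPoch 0 0 n) 0 fun n hn => ?_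
  · simp [qPoch_zero]
  · simp [hn]

end RogersRamanujan

/-- The Rogers–Ramanujan identities: for `|q| < 1`,
`∑_{n=0}^∞ q^{n²}/(q;q)_n = (q²,q³,q⁵;q⁵)_∞/(q;q)_∞` and
`∑_{n=0}^∞ q^{n(n+1)}/(q;q)_n = (q,q⁴,q⁵;q⁵)_∞/(q;q)_∞`. -/
theorem rogers_ramanujan (q : ℂ) (hq : ‖q‖ < 1) :
    HasSum (fun n : ℕ => q ^ (n ^ 2) / qPoch q q n)
      (qPochInf (q ^ 2) (q ^ 5) * qPochInf (q ^ 3) (q ^ 5) * qPochInf (q ^ 5) (q ^ 5) /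
        qPochInf q q) ∧
    HasSum (fun n : ℕ => q ^ (n * (n + 1)) / qPoch q q n)
      (qPochInf q (q ^ 5) * qPochInf (q ^ 4) (q ^ 5) * qPochInf (q ^ 5) (q ^ 5) /
        qPochInf q q) := by
  rcases eq_or_ne q 0 with rfl | hq₀
  · exact ⟨by simpa [qPochInf_zero_left, sq] using hasSum_rogersRamanujan_zero 0,
      by simpa [qPochInf_zero_left] using hasSum_rogersRamanujan_zero 1⟩
  constructor
  · have h := hasSum_rogersRamanujan hq hq₀ zero_le_one
    rw [show q ^ 5 / q ^ (2 * (0 + 1)) = q ^ 3 by field_simp] at h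
    simpa only [add_zero, ← sq, zero_add, mul_one] using h
  · have h := hasSum_rogersRamanujan hq hq₀ le_rfl
    rw [show q ^ 5 / q ^ (2 * (1 + 1)) = q by field_simp, mul_comm (qPochInf (q ^ (2 * (1 + 1))) _)]
      at h
    exact h
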